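/- Every convex pentagon ABCDE (vertices in cyclic order, with interior angles A, B, C, D, E) satisfying the type 1 condition A + B + C = 360° admits a periodic monohedral tiling of the plane. -/

import Mathlib

/-!
Since the angles of a convex pentagon sum to `540°`, the type 1 condition makes the sides `EA`
and `CD` parallel. Gluing the pentagon to its image under the half-turn about the midpoint of
`DE` therefore gives a centrally symmetric convex hexagon, and such a hexagon tiles the plane by
translations.

* Convex position enters through `side_mul_side_pos`: an edge lies on a supporting line, so all
  triples of consecutive vertices have the same orientation. Parallelism is
  `cross_eq_zero_of_angle_sum`, a computation with the sine of the sum of the three angles.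
* In the affine frame with origin `A`, `U = C - A` and `V = A - E`, the pentagon is the region
  `Pent` over `0 ≤ x ≤ 1` between the line `DE` and the broken line `ABC` (`hull_eq`). The lattice
  is spanned by `U` and `W = b U + (h + 1 + d) V`, where `B = (b, h)` and `D = (1, -d)`.
* The translates of the hexagon by multiples of `U` form a row bounded above by the graph of a
  periodic tent function and below by the same graph shifted by `-W`, because the periodic tent
  has a half-turn symmetry (`wave_add`). These graphs (`roof`) are ordered by the row index, so
  the rows cover the plane without overlap (`exists_pent`, `index_unique`).
-/


open EuclideanGeometry

noncomputable section

/-- The Euclidean plane. -/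
abbrev Plane : Type := EuclideanSpace ℝ (Fin 2)

/-- Translate a subset of the plane by a vector. -/
def TranslateSet (v : Plane) (t : Set Plane) : Set Plane := (fun x => x + v) '' t

/-- `T` is a monohedral tiling of the plane by the prototile `P`: every tile is the
image of `P` under an isometry of the plane, the tiles cover the plane, and the
interiors of distinct tiles are disjoint. -/
def IsMonohedralTiling (P : Set Plane) (T : Set (Set Plane)) : Prop :=
  (∀ t ∈ T, ∃ f : Plane ≃ᵢ Plane, t = f '' P) ∧
  (⋃₀ T = Set.univ) ∧
  T.Pairwise (fun s t => Disjoint (interior s) (interior t))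

/-- `e` is an edge of the convex polygon `t`: a nondegenerate segment that is an
extreme subset (a face) of `t`. -/
def IsEdgeOf (e t : Set Plane) : Prop :=
  ∃ x y : Plane, x ≠ y ∧ e = segment ℝ x y ∧ IsExtreme ℝ t e

/-- A tiling is edge-to-edge if any two distinct tiles are disjoint, meet in exactly
one common vertex of both, or meet in exactly one entire common edge of both. -/
def IsEdgeToEdge (T : Set (Set Plane)) : Prop :=
  ∀ s ∈ T, ∀ t ∈ T, s ≠ t →
    Disjoint s t ∨
    (∃ v : Plane, v ∈ Set.extremePoints ℝ s ∧ v ∈ Set.extremePoints ℝ t ∧ s ∩ t = {v}) ∨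
    (∃ e : Set Plane, IsEdgeOf e s ∧ IsEdgeOf e t ∧ s ∩ t = e)

/-- A tiling is periodic if there are two linearly independent vectors such that
translation by each of them maps every tile onto a tile. -/
def IsPeriodicTiling (T : Set (Set Plane)) : Prop :=
  ∃ v w : Plane, LinearIndependent ℝ ![v, w] ∧
    (∀ t ∈ T, TranslateSet v t ∈ T) ∧ (∀ t ∈ T, TranslateSet w t ∈ T)

/-- A convex polygon with exactly `n` vertices: a compact convex set with nonempty
interior having exactly `n` extreme points. -/
def IsConvexNGon (P : Set Plane) (n : ℕ) : Prop :=
  IsCompact P ∧ Convex ℝ P ∧ (interior P).Nonempty ∧ (Set.extremePoints ℝ P).ncard = n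

/-- A convex pentagon with vertices `A,B,C,D,E` listed in cyclic order along the
boundary, so that consecutive listed vertices span the edges. -/
def IsConvexPentagonWithVertices (A B C D E : Plane) (P : Set Plane) : Prop :=
  P = convexHull ℝ {A, B, C, D, E} ∧
  Set.extremePoints ℝ P = {A, B, C, D, E} ∧
  ({A, B, C, D, E} : Set Plane).ncard = 5 ∧
  IsEdgeOf (segment ℝ A B) P ∧ IsEdgeOf (segment ℝ B C) P ∧ IsEdgeOf (segment ℝ C D) P ∧
  IsEdgeOf (segment ℝ D E) P ∧ IsEdgeOf (segment ℝ E A) P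

/-! ### Convex position and parallelism of two sides -/

/-- The cross product (determinant) of two plane vectors. -/
def cross (p q : Plane) : ℝ := p 0 * q 1 - p 1 * q 0

/-- Twice the signed area of the triangle `A B X`: its sign tells on which side of the
line `AB` the point `X` lies. -/
def side (A B X : Plane) : ℝ := cross (B - A) (X - A)

lemma exists_smul_of_cross_eq_zero {p q : Plane} (hp : p ≠ 0) (h : cross p q = 0) :
    ∃ t : ℝ, q = t • p := by
  unfold cross at h
  by_cases h0 : p 0 = 0
  · have h1 : p 1 ≠ 0 := by
      intro h1
      apply hp
      ext i
      fin_cases i <;> simp [h0, h1]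
    refine ⟨q 1 / p 1, ?_⟩
    have hq : q 0 = 0 := by
      have : p 1 * q 0 = 0 := by rw [h0] at h; linarith
      exact (mul_eq_zero.mp this).resolve_left h1
    ext i
    fin_cases i
    · simp [h0, hq]
    · simp; field_simp
  · refine ⟨q 0 / p 0, ?_⟩
    ext i
    fin_cases i
    · simp; field_simp
    · simp; field_simp; linarith

/-- An extreme segment `AB` of a convex set lies on a supporting line: two other extreme
points are strictly on the same side of the line `AB`. Otherwise some `z ∈ [X, Y]` lies on
this line; it cannot be outside `[A, B]` since `A` and `B` are extreme, and it cannot be in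
`[A, B]` since this segment is a face. -/
lemma side_mul_side_pos {P : Set Plane} (hc : Convex ℝ P) {A B X Y : Plane}
    (hA : A ∈ P.extremePoints ℝ) (hB : B ∈ P.extremePoints ℝ)
    (hX : X ∈ P.extremePoints ℝ) (hY : Y ∈ P.extremePoints ℝ)
    (hAB : IsEdgeOf (segment ℝ A B) P) (hne : A ≠ B)
    (hXA : X ≠ A) (hXB : X ≠ B) (hYA : Y ≠ A) (hYB : Y ≠ B) :
    0 < side A B X * side A B Y := by
  obtain ⟨-, -, -, -, hext⟩ := hAB
  have hnot : ∀ Z ∈ P.extremePoints ℝ, Z ≠ A → Z ≠ B → Z ∉ segment ℝ A B := by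
    intro Z hZ h1 h2 hmem
    rw [mem_extremePoints_iff_forall_segment] at hZ
    rcases hZ.2 A hA.1 B hB.1 hmem with h | h
    · exact h1 h.symm
    · exact h2 h.symm
  by_contra hcon
  push Not at hcon
  obtain ⟨s, hs0, hs1, hs⟩ : ∃ s : ℝ, 0 ≤ s ∧ s ≤ 1 ∧
      (1 - s) * side A B X + s * side A B Y = 0 := by
    by_cases hX0 : side A B X = 0
    · exact ⟨0, le_rfl, zero_le_one, by simp [hX0]⟩
    have hd : 0 < side A B X * (side A B X - side A B Y) := by
      have := sq_pos_of_ne_zero hX0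
      nlinarith
    have hd0 : side A B X - side A B Y ≠ 0 := by
      intro h; rw [h] at hd; simp at hd
    refine ⟨side A B X * side A B X / (side A B X * (side A B X - side A B Y)), ?_, ?_, ?_⟩
    · exact div_nonneg (mul_self_nonneg _) hd.le
    · rw [div_le_one hd]; linarith
    · field_simp; ring
  set z : Plane := (1 - s) • X + s • Y with hz
  have hzP : z ∈ P := hc hX.1 hY.1 (by linarith) hs0 (by ring)
  have hz0 : cross (B - A) (z - A) = 0 := by
    rw [← hs, hz]
    simp [side, cross]
    ring
  obtain ⟨t, ht⟩ := exists_smul_of_cross_eq_zero (sub_ne_zero.mpr hne.symm) hz0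
  have hzt : z = A + t • (B - A) := by rw [← ht]; module
  have hzs : z ∈ segment ℝ A B := by
    rcases lt_or_ge t 0 with h | h
    · exfalso
      have hAz : A ∈ openSegment ℝ B z := by
        refine ⟨-t / (1 - t), 1 / (1 - t), div_pos (by linarith) (by linarith),
          div_pos one_pos (by linarith), ?_, ?_⟩
        · have : (1 - t) ≠ 0 := by linarith
          field_simp
          ring
        · rw [hzt]
          have h1 : (1 - t) ≠ 0 := by linarith
          ext i
          simp
          field_simp
          ring
      exact hne (hA.2 hB.1 hzP hAz).symm
    rcases lt_or_ge 1 t with h' | h'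
    · exfalso
      have hBz : B ∈ openSegment ℝ A z := by
        refine ⟨(t - 1) / t, 1 / t, div_pos (by linarith) (by linarith),
          div_pos one_pos (by linarith), ?_, ?_⟩
        · have : t ≠ 0 := by linarith
          field_simp
          ring
        · rw [hzt]
          have h1 : t ≠ 0 := by linarith
          ext i
          simp
          field_simp
          ring
      exact hne (hB.2 hA.1 hzP hBz)
    · exact ⟨1 - t, t, by linarith, h, by ring, by rw [hzt]; module⟩
  by_cases h0 : s = 0
  · apply hnot X hX hXA hXB
    simpa [hz, h0] using hzs
  by_cases h1 : s = 1
  · apply hnot Y hY hYA hYB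
    simpa [hz, h1] using hzs
  refine hnot X hX hXA hXB (hext.left_mem_of_mem_openSegment hX.1 hY.1 hzs ?_)
  exact ⟨1 - s, s, sub_pos.mpr (lt_of_le_of_ne hs1 h1), lt_of_le_of_ne hs0 (Ne.symm h0),
    by ring, rfl⟩

lemma sin_angle_mul (p q : Plane) :
    Real.sin (InnerProductGeometry.angle p q) * (‖p‖ * ‖q‖) = |cross p q| := by
  rw [InnerProductGeometry.sin_angle_mul_norm_mul_norm, ← Real.sqrt_sq_eq_abs]
  congr 1
  simp only [cross, PiLp.inner_apply, Fin.sum_univ_two, RCLike.inner_apply, conj_trivial]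
  ring

lemma cos_angle_mul (p q : Plane) :
    Real.cos (InnerProductGeometry.angle p q) * (‖p‖ * ‖q‖) = p 0 * q 0 + p 1 * q 1 := by
  rw [InnerProductGeometry.cos_angle_mul_norm_mul_norm]
  simp [PiLp.inner_apply, Fin.sum_univ_two]
  ring

lemma sq_add_sq_pos {q : Plane} (hq : q ≠ 0) : 0 < q 0 ^ 2 + q 1 ^ 2 := by
  have h := EuclideanSpace.real_norm_sq_eq q
  rw [Fin.sum_univ_two] at h
  rw [← h]
  positivity

/-- Along a path with successive edge vectors `-p, q, r, t` that always turns in the same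
direction, interior angles with sum `2π` force the first and the last edge to be parallel.
In terms of complex numbers, `conj p * q`, `conj (-q) * r` and `conj (-r) * t` have product
`|q|² |r|² conj p * t`, whose
argument is, up to sign, the sum of the angles. -/
lemma cross_eq_zero_of_angle_sum {p q r t : Plane}
    (h12 : 0 < cross p q * cross (-q) r) (h23 : 0 < cross (-q) r * cross (-r) t)
    (hsum : InnerProductGeometry.angle p q + InnerProductGeometry.angle (-q) r +
      InnerProductGeometry.angle (-r) t = 2 * Real.pi) : cross p t = 0 := by
  have hsin := congrArg Real.sin hsum
  rw [Real.sin_two_pi, Real.sin_add, Real.sin_add, Real.cos_add] at hsin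
  have s1 := sin_angle_mul p q
  have s2 := sin_angle_mul (-q) r
  have s3 := sin_angle_mul (-r) t
  have c1 := cos_angle_mul p q
  have c2 := cos_angle_mul (-q) r
  have c3 := cos_angle_mul (-r) t
  generalize InnerProductGeometry.angle p q = α at *
  generalize InnerProductGeometry.angle (-q) r = β at *
  generalize InnerProductGeometry.angle (-r) t = γ at *
  have key : |cross p q| * ((-q) 0 * r 0 + (-q) 1 * r 1) * ((-r) 0 * t 0 + (-r) 1 * t 1) +
      (p 0 * q 0 + p 1 * q 1) * |cross (-q) r| * ((-r) 0 * t 0 + (-r) 1 * t 1) +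
      (p 0 * q 0 + p 1 * q 1) * ((-q) 0 * r 0 + (-q) 1 * r 1) * |cross (-r) t| -
      |cross p q| * |cross (-q) r| * |cross (-r) t| = 0 := by
    rw [← s1, ← s2, ← s3, ← c1, ← c2, ← c3]
    linear_combination (‖p‖ * ‖q‖) * (‖-q‖ * ‖r‖) * (‖-r‖ * ‖t‖) * hsin
  have hne : cross (-q) r ≠ 0 := by
    intro h; rw [h] at h23; simp at h23
  have hq : 0 < q 0 ^ 2 + q 1 ^ 2 := sq_add_sq_pos (by rintro rfl; apply hne; simp [cross])
  have hr : 0 < r 0 ^ 2 + r 1 ^ 2 := sq_add_sq_pos (by rintro rfl; apply hne; simp [cross])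
  have hfin : (q 0 ^ 2 + q 1 ^ 2) * (r 0 ^ 2 + r 1 ^ 2) * cross p t = 0 := by
    rcases lt_or_gt_of_ne hne with hneg | hpos
    · rw [abs_of_neg hneg, abs_of_neg (neg_of_mul_pos_left h12 hneg.le),
        abs_of_neg (neg_of_mul_pos_right h23 hneg.le)] at key
      simp only [cross, PiLp.neg_apply] at key ⊢
      linear_combination -key
    · rw [abs_of_pos hpos, abs_of_pos (pos_of_mul_pos_left h12 hpos.le),
        abs_of_pos (pos_of_mul_pos_right h23 hpos.le)] at key
      simp only [cross, PiLp.neg_apply] at key ⊢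
      linear_combination key
  exact (mul_eq_zero.mp hfin).resolve_left (mul_pos hq hr).ne'

/-! ### The tiling in coordinates -/

/-- The pentagon in the affine coordinates with `A = (0, 0)`, `C = (1, 0)`, `E = (0, -1)`:
then `D = (1, -d)` and `B = (b, h)`. -/
def Pent (b h d x y : ℝ) : Prop :=
  0 ≤ x ∧ x ≤ 1 ∧ -(1 - x) - d * x ≤ y ∧ b * y ≤ h * x ∧ (1 - b) * y ≤ h * (1 - x)

/-- The strict version of `Pent`, satisfied by the interior points of the pentagon. -/
def PentInt (b h d x y : ℝ) : Prop :=
  0 < x ∧ x < 1 ∧ -(1 - x) - d * x < y ∧ b * y < h * x ∧ (1 - b) * y < h * (1 - x)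

/-- The tent over `[0, 1]` with apex `(b, h)`, i.e. the broken line `ABC`. -/
def tent (b h x : ℝ) : ℝ := min (h * x / b) (h * (1 - x) / (1 - b))

/-- The `1`-periodic extension of the tent. -/
def wave (b h x : ℝ) : ℝ := tent b h (Int.fract x)

section coordinates

variable {b h d : ℝ}

lemma tent_nonneg (hb0 : 0 < b) (hb1 : b < 1) (hh : 0 < h) {x : ℝ} (h0 : 0 ≤ x) (h1 : x ≤ 1) :
    0 ≤ tent b h x :=
  le_min (div_nonneg (mul_nonneg hh.le h0) hb0.le)
    (div_nonneg (mul_nonneg hh.le (by linarith)) (by linarith))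

lemma le_tent_iff (hb0 : 0 < b) (hb1 : b < 1) {x y : ℝ} :
    y ≤ tent b h x ↔ b * y ≤ h * x ∧ (1 - b) * y ≤ h * (1 - x) := by
  rw [tent, le_min_iff, le_div_iff₀ hb0, le_div_iff₀ (by linarith), mul_comm y, mul_comm y]

lemma lt_tent_iff (hb0 : 0 < b) (hb1 : b < 1) {x y : ℝ} :
    y < tent b h x ↔ b * y < h * x ∧ (1 - b) * y < h * (1 - x) := by
  rw [tent, lt_min_iff, lt_div_iff₀ hb0, lt_div_iff₀ (by linarith), mul_comm y, mul_comm y]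

lemma tent_eq_left (hb0 : 0 < b) (hb1 : b < 1) (hh : 0 < h) {x : ℝ} (hx : x ≤ b) :
    tent b h x = h * x / b := by
  apply min_eq_left
  rw [div_le_div_iff₀ hb0 (by linarith)]
  nlinarith

lemma tent_eq_right (hb0 : 0 < b) (hb1 : b < 1) (hh : 0 < h) {x : ℝ} (hx : b ≤ x) :
    tent b h x = h * (1 - x) / (1 - b) := by
  apply min_eq_right
  rw [div_le_div_iff₀ (by linarith) hb0]
  nlinarith

lemma tent_le (hb0 : 0 < b) (hb1 : b < 1) (hh : 0 < h) (x : ℝ) : tent b h x ≤ h := by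
  rcases le_total x b with hx | hx
  · rw [tent_eq_left hb0 hb1 hh hx, div_le_iff₀ hb0]; nlinarith
  · rw [tent_eq_right hb0 hb1 hh hx, div_le_iff₀ (by linarith)]; nlinarith

lemma wave_nonneg (hb0 : 0 < b) (hb1 : b < 1) (hh : 0 < h) (x : ℝ) : 0 ≤ wave b h x :=
  tent_nonneg hb0 hb1 hh (Int.fract_nonneg x) (Int.fract_lt_one x).le

lemma wave_le (hb0 : 0 < b) (hb1 : b < 1) (hh : 0 < h) (x : ℝ) : wave b h x ≤ h :=
  tent_le hb0 hb1 hh _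

lemma wave_sub_int (x : ℝ) (m : ℤ) : wave b h (x - m) = wave b h x := by
  simp [wave]

lemma wave_eq_tent (hb0 : 0 < b) (hb1 : b < 1) (hh : 0 < h) {x : ℝ} (h0 : 0 ≤ x) (h1 : x ≤ 1) :
    wave b h x = tent b h x := by
  rcases h1.lt_or_eq with h1 | rfl
  · rw [wave, Int.fract_eq_self.mpr ⟨h0, h1⟩]
  · rw [wave, tent_eq_right hb0 hb1 hh hb1.le]
    simp [tent_eq_left hb0 hb1 hh hb0.le]

/-- The wave is, up to a shift, invariant under half-turns: this is why a row of pentagons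
and their half-turned copies fits on top of the row below it. -/
lemma wave_add (hb0 : 0 < b) (hb1 : b < 1) (hh : 0 < h) {x : ℝ} (h0 : 0 ≤ x) (h1 : x ≤ 1) :
    wave b h (x + b) = h - tent b h (1 - x) := by
  have hb : (1 - b) ≠ 0 := by linarith
  rcases le_total (x + b) 1 with hx | hx
  · rw [wave_eq_tent hb0 hb1 hh (by linarith) hx, tent_eq_right hb0 hb1 hh (by linarith),
      tent_eq_right hb0 hb1 hh (by linarith)]
    field_simp
    ring
  · rw [← wave_sub_int _ 1, wave_eq_tent hb0 hb1 hh (by push_cast; linarith)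
      (by push_cast; linarith), tent_eq_left hb0 hb1 hh (by push_cast; linarith),
      tent_eq_left hb0 hb1 hh (by linarith)]
    push_cast
    field_simp
    ring

/-- The upper boundary of the `n`-th row of tiles, a graph over the `x`-axis. -/
def roof (b h d : ℝ) (n : ℤ) (x : ℝ) : ℝ := wave b h (x - n * b) + n * (h + 1 + d)

lemma roof_mono (hb0 : 0 < b) (hb1 : b < 1) (hh : 0 < h) (hd : 0 < d) (x : ℝ) {m n : ℤ}
    (hmn : m ≤ n) : roof b h d m x ≤ roof b h d n x := by
  rcases hmn.eq_or_lt with rfl | hlt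
  · rfl
  have h1 : (m : ℝ) + 1 ≤ n := by exact_mod_cast hlt
  have h2 := wave_le hb0 hb1 hh (x - m * b)
  have h3 := wave_nonneg hb0 hb1 hh (x - n * b)
  unfold roof
  nlinarith

lemma roof_pred (m n : ℤ) (x : ℝ) :
    roof b h d (n - 1) x = wave b h ((x - m - n * b) + b) + n * (h + 1 + d) - (h + 1 + d) := by
  rw [roof, ← wave_sub_int _ m]
  push_cast
  ring_nf

lemma roof_eq (m n : ℤ) (x : ℝ) :
    roof b h d n x = wave b h (x - m - n * b) + n * (h + 1 + d) := by
  rw [roof, ← wave_sub_int _ m]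
  ring_nf

lemma exists_pent (hb0 : 0 < b) (hb1 : b < 1) (hh : 0 < h) (hd : 0 < d) (x y : ℝ) :
    ∃ m n : ℤ, Pent b h d (x - m - n * b) (y - n * (h + 1 + d)) ∨
      Pent b h d (1 - (x - m - n * b)) (-(d + 1) - (y - n * (h + 1 + d))) := by
  have hk : 0 < h + 1 + d := by linarith
  obtain ⟨n, hn, hmin⟩ := Int.exists_least_of_bdd (P := fun n : ℤ => y ≤ roof b h d n x)
    (by
      refine ⟨⌊(y - h) / (h + 1 + d)⌋, fun n hn => ?_⟩
      have h1 := wave_le hb0 hb1 hh (x - n * b)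
      have h2 : (y - h) / (h + 1 + d) ≤ n := by
        rw [div_le_iff₀ hk]; unfold roof at hn; linarith
      exact_mod_cast (Int.floor_le _).trans h2)
    (by
      refine ⟨⌈y / (h + 1 + d)⌉, ?_⟩
      have h1 := Int.le_ceil (y / (h + 1 + d))
      rw [div_le_iff₀ hk] at h1
      have h2 := wave_nonneg hb0 hb1 hh (x - ⌈y / (h + 1 + d)⌉ * b)
      unfold roof
      linarith)
  have hlow : roof b h d (n - 1) x < y := by
    by_contra hcon
    have := hmin (n - 1) (not_lt.mp hcon)
    omega
  refine ⟨⌊x - n * b⌋, n, ?_⟩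
  rw [roof_pred ⌊x - n * b⌋] at hlow
  rw [roof_eq ⌊x - n * b⌋] at hn
  have hf0 : 0 ≤ x - ⌊x - n * b⌋ - n * b := by linarith [Int.floor_le (x - n * b)]
  have hf1 : x - ⌊x - n * b⌋ - n * b ≤ 1 := by linarith [Int.lt_floor_add_one (x - n * b)]
  generalize x - ⌊x - n * b⌋ - n * b = f at *
  rw [wave_add hb0 hb1 hh hf0 hf1] at hlow
  rw [wave_eq_tent hb0 hb1 hh hf0 hf1] at hn
  rcases le_total (-(1 - f) - d * f) (y - n * (h + 1 + d)) with hcase | hcase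
  · left
    exact ⟨hf0, hf1, hcase, (le_tent_iff hb0 hb1).mp (by linarith)⟩
  · right
    exact ⟨by linarith, by linarith, by linarith, (le_tent_iff hb0 hb1).mp (by linarith)⟩

lemma PentInt.bounds (hb0 : 0 < b) (hb1 : b < 1) (hh : 0 < h) (hd : 0 < d) {x y : ℝ} {m n : ℤ}
    (H : PentInt b h d (x - m - n * b) (y - n * (h + 1 + d))) :
    roof b h d (n - 1) x < y ∧ y < roof b h d n x ∧ m = ⌊x - n * b⌋ := by
  obtain ⟨h0, h1, h2, h3⟩ := H
  rw [← lt_tent_iff hb0 hb1, ← wave_eq_tent hb0 hb1 hh h0.le h1.le] at h3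
  have hw := wave_le hb0 hb1 hh ((x - m - n * b) + b)
  refine ⟨?_, ?_, ?_⟩
  · rw [roof_pred m]
    nlinarith
  · rw [roof_eq m]; linarith
  · symm; rw [Int.floor_eq_iff]; constructor <;> linarith

lemma PentInt.bounds_neg (hb0 : 0 < b) (hb1 : b < 1) (hh : 0 < h) (hd : 0 < d) {x y : ℝ}
    {m n : ℤ}
    (H : PentInt b h d (1 - (x - m - n * b)) (-(d + 1) - (y - n * (h + 1 + d)))) :
    roof b h d (n - 1) x < y ∧ y < roof b h d n x ∧ m = ⌊x - n * b⌋ := by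
  obtain ⟨h0, h1, h2, h3⟩ := H
  rw [← lt_tent_iff hb0 hb1] at h3
  have hw := wave_nonneg hb0 hb1 hh (x - m - n * b)
  refine ⟨?_, ?_, ?_⟩
  · rw [roof_pred m, wave_add hb0 hb1 hh (by linarith) (by linarith)]
    linarith
  · rw [roof_eq m]
    nlinarith
  · symm; rw [Int.floor_eq_iff]; constructor <;> linarith

/-- A point `(x, y)` strictly between consecutive roofs determines its row and column. -/
lemma index_unique (hb0 : 0 < b) (hb1 : b < 1) (hh : 0 < h) (hd : 0 < d) {x y : ℝ}
    {m n m' n' : ℤ}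
    (H : roof b h d (n - 1) x < y ∧ y < roof b h d n x ∧ m = ⌊x - n * b⌋)
    (H' : roof b h d (n' - 1) x < y ∧ y < roof b h d n' x ∧ m' = ⌊x - n' * b⌋) :
    m = m' ∧ n = n' := by
  have key : ∀ i j : ℤ, y < roof b h d i x → roof b h d (j - 1) x < y → j ≤ i := by
    intro i j hi hj
    by_contra hcon
    have := roof_mono hb0 hb1 hh hd x (show i ≤ j - 1 by omega)
    linarith
  have hn : n = n' := le_antisymm (key _ _ H'.2.1 H.1) (key _ _ H.2.1 H'.1)
  subst hn
  exact ⟨H.2.2.trans H'.2.2.symm, rfl⟩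

end coordinates

/-! ### The tiling in the plane -/

/-- The point with coordinates `(x, y)` in the affine frame `(A, U, V)`. -/
def pt (A U V : Plane) (x y : ℝ) : Plane := A + x • U + y • V

lemma pt_inj {A U V : Plane} (hUV : cross U V ≠ 0) {x y x' y' : ℝ}
    (h : pt A U V x y = pt A U V x' y') : x = x' ∧ y = y' := by
  have h0 := congrArg (fun p : Plane => p 0) h
  have h1 := congrArg (fun p : Plane => p 1) h
  simp only [pt, PiLp.add_apply, PiLp.smul_apply, smul_eq_mul] at h0 h1
  constructor
  · apply sub_eq_zero.mp
    refine (mul_eq_zero.mp ?_).resolve_right hUV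
    unfold cross
    linear_combination V 1 * h0 - V 0 * h1
  · apply sub_eq_zero.mp
    refine (mul_eq_zero.mp ?_).resolve_right hUV
    unfold cross
    linear_combination U 0 * h1 - U 1 * h0

lemma pt_surj {U V : Plane} (A : Plane) (hUV : cross U V ≠ 0) (p : Plane) :
    ∃ x y, p = pt A U V x y := by
  refine ⟨cross (p - A) V / cross U V, cross U (p - A) / cross U V, ?_⟩
  ext i
  simp only [pt, PiLp.add_apply, PiLp.smul_apply, smul_eq_mul]
  field_simp
  fin_cases i <;> simp [cross] <;> ring

lemma hull_eq {A U V : Plane} {b h d : ℝ} (hb0 : 0 < b) (hb1 : b < 1) (hh : 0 < h) (hd : 0 < d) :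
    convexHull ℝ {A, pt A U V b h, pt A U V 1 0, pt A U V 1 (-d), pt A U V 0 (-1)} =
      {p | ∃ x y, p = pt A U V x y ∧ Pent b h d x y} := by
  apply Set.Subset.antisymm
  · apply convexHull_min
    · have hA : A = pt A U V 0 0 := by simp [pt]
      rintro p (rfl | rfl | rfl | rfl | rfl)
      · exact ⟨0, 0, hA, by norm_num, by norm_num, by norm_num, by norm_num, by linarith⟩
      · exact ⟨b, h, rfl, hb0.le, hb1.le, by nlinarith, by linarith, by linarith⟩
      · exact ⟨1, 0, rfl, by norm_num, by norm_num, by linarith, by linarith, by linarith⟩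
      · exact ⟨1, -d, rfl, by norm_num, by norm_num, by linarith, by nlinarith, by nlinarith⟩
      · exact ⟨0, -1, rfl, by norm_num, by norm_num, by linarith, by linarith, by linarith⟩
    · rintro _ ⟨x, y, rfl, h1, h2, h3, h4, h5⟩ _ ⟨x', y', rfl, h1', h2', h3', h4', h5'⟩ s t hs ht hst
      refine ⟨s * x + t * x', s * y + t * y', ?_, ?_⟩
      · have : s = 1 - t := by linarith
        subst this
        unfold pt
        module
      · have e1 := mul_le_mul_of_nonneg_left h1 hs
        have e2 := mul_le_mul_of_nonneg_left h2 hs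
        have e3 := mul_le_mul_of_nonneg_left h3 hs
        have e4 := mul_le_mul_of_nonneg_left h4 hs
        have e5 := mul_le_mul_of_nonneg_left h5 hs
        have e1' := mul_le_mul_of_nonneg_left h1' ht
        have e2' := mul_le_mul_of_nonneg_left h2' ht
        have e3' := mul_le_mul_of_nonneg_left h3' ht
        have e4' := mul_le_mul_of_nonneg_left h4' ht
        have e5' := mul_le_mul_of_nonneg_left h5' ht
        have : s = 1 - t := by linarith
        subst this
        refine ⟨?_, ?_, ?_, ?_, ?_⟩ <;> linarith
  · rintro _ ⟨x, y, rfl, h1, h2, h3, h4, h5⟩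
    set K := convexHull ℝ ({A, pt A U V b h, pt A U V 1 0, pt A U V 1 (-d), pt A U V 0 (-1)} :
      Set Plane) with hK
    have hc : Convex ℝ K := convex_convexHull ℝ _
    have comb : ∀ x y x' y' s : ℝ, pt A U V x y ∈ K → pt A U V x' y' ∈ K → 0 ≤ s → s ≤ 1 →
        pt A U V ((1 - s) * x + s * x') ((1 - s) * y + s * y') ∈ K := by
      intro x y x' y' s hp hq h0 h1
      convert hc hp hq (sub_nonneg.mpr h1) h0 (by ring) using 1
      unfold pt
      module
    have mA : pt A U V 0 0 ∈ K := subset_convexHull ℝ _ (by simp [pt])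
    have mB : pt A U V b h ∈ K := subset_convexHull ℝ _ (by simp)
    have mC : pt A U V 1 0 ∈ K := subset_convexHull ℝ _ (by simp)
    have mD : pt A U V 1 (-d) ∈ K := subset_convexHull ℝ _ (by simp)
    have mE : pt A U V 0 (-1) ∈ K := subset_convexHull ℝ _ (by simp)
    -- the vertical line through the point meets `DE` below it and the broken line `ABC` above it
    have hbase : pt A U V x (-(1 - x) - d * x) ∈ K := by
      convert comb _ _ _ _ x mE mD h1 h2 using 2 <;> ring
    have htop : pt A U V x (tent b h x) ∈ K := by
      rcases le_total x b with hx | hx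
      · rw [tent_eq_left hb0 hb1 hh hx]
        convert comb _ _ _ _ (x / b) mA mB (div_nonneg h1 hb0.le)
          ((div_le_one hb0).mpr hx) using 2 <;> field_simp <;> ring
      · rw [tent_eq_right hb0 hb1 hh hx]
        have hb : 0 < 1 - b := by linarith
        convert comb _ _ _ _ ((1 - x) / (1 - b)) mC mB (div_nonneg (by linarith) hb.le)
          ((div_le_one hb).mpr (by linarith)) using 2 <;> field_simp <;> ring
    have hy : y ≤ tent b h x := (le_tent_iff hb0 hb1).mpr ⟨h4, h5⟩
    have hpos : 0 < tent b h x - (-(1 - x) - d * x) := by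
      have := tent_nonneg hb0 hb1 hh h1 h2
      rcases le_total x (1 / 2) with hx | hx <;> nlinarith
    convert comb _ _ _ _ ((y - (-(1 - x) - d * x)) / (tent b h x - (-(1 - x) - d * x)))
      hbase htop (div_nonneg (by linarith) hpos.le)
      ((div_le_one hpos).mpr (by linarith)) using 2
    · ring
    · linear_combination -div_mul_cancel₀ (y - (-(1 - x) - d * x)) hpos.ne'

lemma exists_of_mem_interior {S : Set Plane} {p : Plane} (hp : p ∈ interior S) (v : Plane) :
    ∃ ε : ℝ, 0 < ε ∧ p + ε • v ∈ S ∧ p + (-ε) • v ∈ S := by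
  have hcont : Continuous fun t : ℝ => p + t • v := by fun_prop
  have hnh : ∀ᶠ t in nhds (0 : ℝ), p + t • v ∈ S := by
    apply hcont.continuousAt.eventually
    simpa using mem_interior_iff_mem_nhds.mp hp
  obtain ⟨ε, hε, hball⟩ := Metric.eventually_nhds_iff.mp hnh
  have hε2 : |ε / 2| < ε := by rw [abs_of_pos (by linarith)]; linarith
  exact ⟨ε / 2, by linarith, hball (by rwa [dist_zero_right, Real.norm_eq_abs]),
    hball (by rwa [dist_zero_right, norm_neg, Real.norm_eq_abs])⟩

lemma pentInt_of_mem_interior {A U V : Plane} (hUV : cross U V ≠ 0) {b h d : ℝ}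
    (hb0 : 0 < b) (hb1 : b < 1) {x y : ℝ}
    (hp : pt A U V x y ∈ interior {p | ∃ x y, p = pt A U V x y ∧ Pent b h d x y}) :
    PentInt b h d x y := by
  obtain ⟨ε, hε, ⟨x1, y1, e1, q1⟩, ⟨x2, y2, e2, q2⟩⟩ := exists_of_mem_interior hp U
  obtain ⟨η, hη, ⟨x3, y3, e3, q3⟩, ⟨x4, y4, e4, q4⟩⟩ := exists_of_mem_interior hp V
  obtain ⟨rfl, rfl⟩ := pt_inj hUV
    (show pt A U V (x + ε) y = pt A U V x1 y1 by rw [← e1]; unfold pt; module)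
  obtain ⟨rfl, rfl⟩ := pt_inj hUV
    (show pt A U V (x - ε) y = pt A U V x2 _ by rw [← e2]; unfold pt; module)
  obtain ⟨rfl, rfl⟩ := pt_inj hUV
    (show pt A U V x (y + η) = pt A U V x3 y3 by rw [← e3]; unfold pt; module)
  obtain ⟨h5, rfl⟩ := pt_inj hUV
    (show pt A U V x (y - η) = pt A U V x4 y4 by rw [← e4]; unfold pt; module)
  subst h5
  obtain ⟨-, a2, -, -, -⟩ := q1
  obtain ⟨b1, -, -, -, -⟩ := q2
  obtain ⟨-, -, -, c4, c5⟩ := q3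
  obtain ⟨-, -, d3, -, -⟩ := q4
  refine ⟨by linarith, by linarith, by linarith, ?_, ?_⟩
  · nlinarith [mul_pos hb0 hη]
  · nlinarith [mul_pos (sub_pos.mpr hb1) hη]

/-- The isometry placing the tile of kind `s` with lattice vector `v`: a translation for
`s = true`, a translated half-turn about the midpoint of `DE` (where `F = D + E`) for
`s = false`. -/
def place (F : Plane) (s : Bool) (v : Plane) : Plane ≃ᵢ Plane :=
  if s then IsometryEquiv.addRight v else IsometryEquiv.subLeft (F + v)

lemma mem_interior_place {F : Plane} {s : Bool} {v : Plane} {S : Set Plane} {p : Plane}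
    (hp : p ∈ interior (place F s v '' S)) :
    ∃ q ∈ interior S, p = place F s v q := by
  have := (place F s v).toHomeomorph.image_interior S
  rw [IsometryEquiv.coe_toHomeomorph] at this
  rw [← this] at hp
  obtain ⟨q, hq, rfl⟩ := hp
  exact ⟨q, hq, rfl⟩

lemma tiling_of_coordinates {A U V : Plane} (hUV : cross U V ≠ 0) {b h d : ℝ}
    (hb0 : 0 < b) (hb1 : b < 1) (hh : 0 < h) (hd : 0 < d) :
    ∃ T : Set (Set Plane),
      IsMonohedralTiling {p | ∃ x y, p = pt A U V x y ∧ Pent b h d x y} T ∧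
      IsPeriodicTiling T := by
  set P : Set Plane := {p | ∃ x y, p = pt A U V x y ∧ Pent b h d x y} with hP
  set F : Plane := pt A U V 1 (-d) + pt A U V 0 (-1) with hF
  set W : Plane := b • U + (h + 1 + d) • V with hW
  let L : ℤ → ℤ → Plane := fun m n => (m : ℝ) • U + (n : ℝ) • W
  -- coordinates of the preimage of a point in the tile with index `(s, m, n)`
  have hpos : ∀ (m n : ℤ) (x y : ℝ), place F true (L m n)
      (pt A U V (x - m - n * b) (y - n * (h + 1 + d))) = pt A U V x y := by
    intro m n x y
    simp only [place, if_true, IsometryEquiv.addRight_apply, L, hW, pt]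
    module
  have hneg : ∀ (m n : ℤ) (x y : ℝ), place F false (L m n)
      (pt A U V (1 - (x - m - n * b)) (-(d + 1) - (y - n * (h + 1 + d)))) = pt A U V x y := by
    intro m n x y
    simp only [place, L, hW, hF, pt, Bool.false_eq_true, if_false, IsometryEquiv.subLeft_apply]
    module
  have hstrict : ∀ (s : Bool) (m n : ℤ) (x y : ℝ),
      pt A U V x y ∈ interior (place F s (L m n) '' P) →
      (s = true ∧ PentInt b h d (x - m - n * b) (y - n * (h + 1 + d))) ∨
      (s = false ∧ PentInt b h d (1 - (x - m - n * b)) (-(d + 1) - (y - n * (h + 1 + d)))) := by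
    intro s m n x y hp
    obtain ⟨q, hq, he⟩ := mem_interior_place hp
    cases s
    · right
      rw [← hneg m n x y] at he
      rw [← (place F false (L m n)).injective he] at hq
      exact ⟨rfl, pentInt_of_mem_interior hUV hb0 hb1 hq⟩
    · left
      rw [← hpos m n x y] at he
      rw [← (place F true (L m n)).injective he] at hq
      exact ⟨rfl, pentInt_of_mem_interior hUV hb0 hb1 hq⟩
  have htrans : ∀ (s : Bool) (v w : Plane),
      TranslateSet w (place F s v '' P) = place F s (v + w) '' P := by
    intro s v w
    rw [TranslateSet, Set.image_image]
    congr 1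
    funext x
    cases s
    · simp only [place, Bool.false_eq_true, if_false, IsometryEquiv.subLeft_apply]; abel
    · simp only [place, if_true, IsometryEquiv.addRight_apply]; abel
  refine ⟨{t | ∃ (s : Bool) (m n : ℤ), t = place F s (L m n) '' P}, ⟨?_, ?_, ?_⟩, U, W, ?_, ?_, ?_⟩
  · rintro t ⟨s, m, n, rfl⟩
    exact ⟨_, rfl⟩
  · apply Set.eq_univ_of_forall
    intro p
    obtain ⟨x, y, rfl⟩ := pt_surj A hUV p
    obtain ⟨m, n, hmn | hmn⟩ := exists_pent hb0 hb1 hh hd x y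
    · exact ⟨_, ⟨true, m, n, rfl⟩, _, ⟨_, _, rfl, hmn⟩, hpos m n x y⟩
    · exact ⟨_, ⟨false, m, n, rfl⟩, _, ⟨_, _, rfl, hmn⟩, hneg m n x y⟩
  · rintro t ⟨s, m, n, rfl⟩ t' ⟨s', m', n', rfl⟩ hne
    rw [Set.disjoint_left]
    intro p hp hp'
    apply hne
    obtain ⟨x, y, rfl⟩ := pt_surj A hUV p
    rcases hstrict _ _ _ _ _ hp with ⟨rfl, H⟩ | ⟨rfl, H⟩ <;>
    rcases hstrict _ _ _ _ _ hp' with ⟨rfl, H'⟩ | ⟨rfl, H'⟩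
    · obtain ⟨rfl, rfl⟩ := index_unique hb0 hb1 hh hd (H.bounds hb0 hb1 hh hd)
        (H'.bounds hb0 hb1 hh hd)
      rfl
    -- mixed kinds: the point would lie strictly on both sides of the common edge `DE`
    · obtain ⟨rfl, rfl⟩ := index_unique hb0 hb1 hh hd (H.bounds hb0 hb1 hh hd)
        (H'.bounds_neg hb0 hb1 hh hd)
      have h1 := H.2.2.1
      have h2 := H'.2.2.1
      linarith
    · obtain ⟨rfl, rfl⟩ := index_unique hb0 hb1 hh hd (H.bounds_neg hb0 hb1 hh hd)
        (H'.bounds hb0 hb1 hh hd)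
      have h1 := H.2.2.1
      have h2 := H'.2.2.1
      linarith
    · obtain ⟨rfl, rfl⟩ := index_unique hb0 hb1 hh hd (H.bounds_neg hb0 hb1 hh hd)
        (H'.bounds_neg hb0 hb1 hh hd)
      rfl
  · rw [LinearIndependent.pair_iff]
    intro s t hst
    have e : pt A U V (s + t * b) (t * (h + 1 + d)) = pt A U V 0 0 := by
      have : pt A U V (s + t * b) (t * (h + 1 + d)) = A + (s • U + t • W) := by
        simp only [pt, hW]; module
      rw [this, hst]; simp [pt]
    obtain ⟨e1, e2⟩ := pt_inj hUV e
    have ht : t = 0 := (mul_eq_zero.mp e2).resolve_right (by linarith)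
    subst ht
    exact ⟨by linarith, rfl⟩
  · rintro t ⟨s, m, n, rfl⟩
    refine ⟨s, m + 1, n, ?_⟩
    rw [htrans]
    congr 3
    simp only [L]; push_cast; module
  · rintro t ⟨s, m, n, rfl⟩
    refine ⟨s, m, n + 1, ?_⟩
    rw [htrans]
    congr 3
    simp only [L]; push_cast; module

/-- Every convex pentagon `ABCDE` of type 1 (`A + B + C = 360°`) admits a
periodic monohedral tiling of the plane. -/
theorem type1_pentagon_admits_periodic_tiling
    (A B C D E : Plane) (P : Set Plane)
    (hP : IsConvexPentagonWithVertices A B C D E P)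
    (hangle : EuclideanGeometry.angle E A B + EuclideanGeometry.angle A B C +
        EuclideanGeometry.angle B C D = 2 * Real.pi) :
    ∃ T : Set (Set Plane), IsMonohedralTiling P T ∧ IsPeriodicTiling T := by
  obtain ⟨rfl, hext, hcard, hAB, hBC, hCD, hDE, hEA⟩ := hP
  have hconv : Convex ℝ (convexHull ℝ ({A, B, C, D, E} : Set Plane)) := convex_convexHull ℝ _
  have hmem : ∀ X ∈ ({A, B, C, D, E} : Set Plane),
      X ∈ (convexHull ℝ ({A, B, C, D, E} : Set Plane)).extremePoints ℝ := by
    intro X hX; rwa [hext]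
  have mA := hmem A (by simp)
  have mB := hmem B (by simp)
  have mC := hmem C (by simp)
  have mD := hmem D (by simp)
  have mE := hmem E (by simp)
  have hnodup : [A, B, C, D, E].Nodup := by
    classical
    have h1 : ((([A, B, C, D, E] : List Plane).toFinset : Finset Plane) : Set Plane) =
        {A, B, C, D, E} := by
      ext X; simp
    rw [← h1, Set.ncard_coe_finset] at hcard
    exact Multiset.toFinset_card_eq_card_iff_nodup.mp hcard
  simp only [List.nodup_cons, List.mem_cons, List.not_mem_nil, or_false, not_or,
    not_false_eq_true, List.nodup_nil, and_true] at hnodup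
  obtain ⟨⟨(nAB : A ≠ B), (nAC : A ≠ C), (nAD : A ≠ D), (nAE : A ≠ E)⟩,
    ⟨(nBC : B ≠ C), (nBD : B ≠ D), (nBE : B ≠ E)⟩, ⟨(nCD : C ≠ D), (nCE : C ≠ E)⟩,
    (nDE : D ≠ E)⟩ := hnodup
  have sABCE := side_mul_side_pos hconv mA mB mC mE hAB nAB nAC.symm nBC.symm nAE.symm nBE.symm
  have sBCAD := side_mul_side_pos hconv mB mC mA mD hBC nBC nAB nAC nBD.symm nCD.symm
  have sCDAB := side_mul_side_pos hconv mC mD mA mB hCD nCD nAC nAD nBC nBD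
  have sDEAC := side_mul_side_pos hconv mD mE mA mC hDE nDE nAD nAE nCD nCE
  have sEABC := side_mul_side_pos hconv mE mA mB mC hEA nAE.symm nBE nAB.symm nCE nAC.symm
  have hpar : cross (E - A) (D - C) = 0 := by
    apply cross_eq_zero_of_angle_sum (q := B - A) (r := C - B)
    · convert sABCE using 1; simp only [side, cross, PiLp.neg_apply, PiLp.sub_apply]; ring
    · convert sBCAD using 1; simp only [side, cross, PiLp.neg_apply, PiLp.sub_apply]; ring
    · rw [neg_sub, neg_sub]; exact hangle
  obtain ⟨d, hDd⟩ := exists_smul_of_cross_eq_zero (sub_ne_zero.mpr nAE.symm) hpar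
  have hUV : cross (C - A) (A - E) ≠ 0 := by
    intro h0
    have : side E A C = 0 := by
      rw [← neg_eq_zero, ← h0]; simp only [side, cross, PiLp.sub_apply]; ring
    rw [this] at sEABC; simp at sEABC
  obtain ⟨b, h, hB⟩ := pt_surj A hUV B
  obtain ⟨U, hU⟩ : ∃ U, U = C - A := ⟨_, rfl⟩
  obtain ⟨V, hV⟩ : ∃ V, V = A - E := ⟨_, rfl⟩
  rw [← hU, ← hV] at hB hUV
  have hC : C = pt A U V 1 0 := by rw [hU, pt]; module
  have hE : E = pt A U V 0 (-1) := by rw [hV, pt]; module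
  have hD : D = pt A U V 1 (-d) := by
    rw [eq_add_of_sub_eq hDd, hV, hU, pt]; module
  clear hU hV
  subst hB hC hE hD
  -- the signed areas of the triangles are polynomials in `b, h, d` times `cross U V`
  have hsq : 0 < cross U V ^ 2 := by positivity
  have hb0 : 0 < b := by
    refine pos_of_mul_pos_left (b := cross U V ^ 2) ?_ hsq.le
    exact lt_of_lt_of_eq sEABC (by simp [side, cross, pt]; ring)
  have hd : 0 < d := by
    refine pos_of_mul_pos_left (b := cross U V ^ 2) ?_ hsq.le
    exact lt_of_lt_of_eq sDEAC (by simp [side, cross, pt]; ring)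
  have hh : 0 < h := by
    refine pos_of_mul_pos_left (b := b * cross U V ^ 2) ?_ (by positivity)
    exact lt_of_lt_of_eq sABCE (by simp [side, cross, pt]; ring)
  have hb1 : b < 1 := by
    refine sub_pos.mp (pos_of_mul_pos_left (b := d ^ 2 * cross U V ^ 2) ?_ (by positivity))
    exact lt_of_lt_of_eq sCDAB (by simp [side, cross, pt]; ring)
  rw [hull_eq hb0 hb1 hh hd]
  exact tiling_of_coordinates hUV hb0 hb1 hh hd
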